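/- arXiv:2303.17936 — 2 statements merged into one kernel-verified Lean document; each statement's English description precedes it below -/
import Mathlib

section
/- The quasi-modular Eisenstein series E₂ satisfies the Chazy equation: for every τ in the upper half-plane ℍ, 2E₂'''(τ) − 2E₂(τ)E₂''(τ) + 3(E₂'(τ))² = 0. -/
open Complex

noncomputable section

/-- The normalized derivative `F' = (2πi)⁻¹ dF/dτ`. -/
def nderiv (F : ℂ → ℂ) : ℂ → ℂ := fun τ => (2 * Real.pi * Complex.I)⁻¹ * deriv F τ

/-- `q = e^{2πiτ}`. -/
def qq (τ : ℂ) : ℂ := Complex.exp (2 * Real.pi * Complex.I * τ)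

/-- Sum of the `k`-th powers of the positive divisors of `n`. -/
def sigma' (k n : ℕ) : ℕ := ∑ d ∈ n.divisors, d ^ k

/-- The Eisenstein series `E₂`. -/
def E2 : ℂ → ℂ := fun τ => 1 - 24 * ∑' n : ℕ, (sigma' 1 (n + 1) : ℂ) * qq τ ^ (n + 1)

section Aux

open UpperHalfPlane hiding I
open Derivative Filter
open scoped Manifold MatrixGroups ModularForm Topology

/-- Mathlib's `E₂`. -/
abbrev P : ℍ → ℂ := EisensteinSeries.E2

lemma P_mdiff : MDiff P := E2_mdifferentiable

lemma D_zeroAtImInfty {F : ℍ → ℂ} (hF : MDiff F) (hb : IsBoundedAtImInfty F) :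
    IsZeroAtImInfty (normalizedDerivOfComplex F) := by
  rw [isBoundedAtImInfty_iff] at hb
  obtain ⟨M, A, hM⟩ := hb
  rw [isZeroAtImInfty_iff]
  intro ε hε
  set K : ℝ := ‖(2 * Real.pi * Complex.I : ℂ)⁻¹‖ with hK
  have hK0 : 0 ≤ K := norm_nonneg _
  set M' := max M 0 with hM'
  refine ⟨max (max (2 * A) 1) (2 * K * M' / ε), fun z hz => ?_⟩
  have h1 : 2 * A ≤ z.im := le_trans (le_trans (le_max_left _ _) (le_max_left _ _)) hz
  have h2 : 2 * K * M' / ε ≤ z.im := le_trans (le_max_right _ _) hz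
  have hz0 : 0 < z.im := z.im_pos
  have him : ∀ w ∈ Metric.closedBall (z : ℂ) (z.im / 2), z.im / 2 ≤ w.im := by
    intro w hw
    have h3 : ‖w - z‖ ≤ z.im / 2 := by simpa [dist_eq_norm] using hw
    have h4 := (abs_le.mp ((Complex.abs_im_le_norm (w - z)).trans h3)).1
    simp only [Complex.sub_im, UpperHalfPlane.coe_im] at h4
    linarith
  have hd : ‖deriv (F ∘ ofComplex) (z : ℂ)‖ ≤ M' / (z.im / 2) := by
    refine Complex.norm_deriv_le_of_forall_mem_sphere_norm_le (by positivity) ?_ ?_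
    · refine DifferentiableOn.diffContOnCl_ball (U := upperHalfPlaneSet)
        (UpperHalfPlane.mdifferentiable_iff.mp hF) ?_
      intro w hw
      have := him w hw
      show 0 < w.im
      linarith
    · intro w hw
      have h5 := him w (Metric.sphere_subset_closedBall hw)
      have h6 : 0 < w.im := by linarith
      rw [Function.comp_apply, ofComplex_apply_of_im_pos h6]
      refine (hM _ ?_).trans (le_max_left _ _)
      show A ≤ w.im
      linarith
  unfold normalizedDerivOfComplex
  rw [norm_mul]
  calc _ ≤ K * (M' / (z.im / 2)) := mul_le_mul_of_nonneg_left hd hK0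
    _ = (2 * K * M') / z.im := by field_simp
    _ ≤ ε := by
      rw [div_le_iff₀ hz0]
      rw [div_le_iff₀ hε] at h2
      linarith

/-- The weight-four form `E₂' - E₂²/12`. -/
def fq : ℍ → ℂ := fun z => normalizedDerivOfComplex P z - 12⁻¹ * P z ^ 2

lemma fq_eq : fq = normalizedDerivOfComplex P - (12⁻¹ : ℂ) • (P ^ 2) := by
  ext z; simp [fq]

lemma fq_mdiff : MDiff fq := by
  have h := (normalizedDerivOfComplex_mdifferentiable P_mdiff).sub
    ((P_mdiff.mul P_mdiff).const_smul (12⁻¹ : ℂ))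
  convert! h using 1
  ext z; simp [fq, pow_two]

lemma D_D2 (γ : SL(2, ℤ)) (z : ℍ) :
    normalizedDerivOfComplex (EisensteinSeries.D2 γ) z
      = - (γ 1 0 / denom γ z) ^ 2 := by
  have hd : HasDerivAt (fun w : ℂ => (denom γ w) ^ (-1 : ℤ))
      (((-1 : ℤ) : ℂ) * (γ 1 0 : ℂ) * (denom γ z) ^ ((-1 : ℤ) - 1)) (z : ℂ) := by
    simpa using hasDerivAt_denom_zpow (γ : GL (Fin 2) ℝ) (-1) z
  have hc : (EisensteinSeries.D2 γ) ∘ ofComplex =ᶠ[𝓝 (z : ℂ)]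
      fun w => (2 * Real.pi * Complex.I * γ 1 0) * (denom γ w) ^ (-1 : ℤ) := by
    filter_upwards [isOpen_upperHalfPlaneSet.mem_nhds z.im_pos] with w hw
    simp [EisensteinSeries.D2, ofComplex_apply_of_im_pos hw, div_eq_mul_inv]
  have hz : denom (γ : GL (Fin 2) ℝ) z ≠ 0 := denom_ne_zero _ z
  unfold normalizedDerivOfComplex
  rw [((hd.const_mul _).congr_of_eventuallyEq hc).deriv]
  have hpi : (2 * Real.pi * Complex.I : ℂ) ≠ 0 := Complex.two_pi_I_ne_zero
  rw [show ((-1 : ℤ) - 1) = -((2 : ℕ) : ℤ) by norm_num, zpow_neg, zpow_natCast]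
  push_cast
  field_simp

lemma D2_mdiff (γ : SL(2, ℤ)) : MDiff (EisensteinSeries.D2 γ) := by
  intro z
  rw [UpperHalfPlane.mdifferentiableAt_iff]
  have hd := hasDerivAt_denom_zpow (γ : GL (Fin 2) ℝ) (-1) z
  have hc : (EisensteinSeries.D2 γ) ∘ ofComplex =ᶠ[𝓝 (z : ℂ)]
      fun w => (2 * Real.pi * Complex.I * γ 1 0) * (denom γ w) ^ (-1 : ℤ) := by
    filter_upwards [isOpen_upperHalfPlaneSet.mem_nhds z.im_pos] with w hw
    simp [EisensteinSeries.D2, ofComplex_apply_of_im_pos hw, div_eq_mul_inv]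
  exact ((hd.const_mul _).congr_of_eventuallyEq hc).differentiableAt

lemma fq_slash (γ : SL(2, ℤ)) : fq ∣[(4 : ℤ)] γ = fq := by
  ext z
  have hE : P ∣[(2 : ℤ)] γ = P - (1 / (2 * riemannZeta 2)) • EisensteinSeries.D2 γ :=
    EisensteinSeries.E2_slash_action γ
  have hEz := congrFun hE z
  have hD := congrFun (normalizedDerivOfComplex_SL_slash (k := 2) P_mdiff (γ := γ)) z
  rw [hE, normalizedDerivOfComplex_sub _ _ P_mdiff ((D2_mdiff γ).const_smul _),
    normalizedDerivOfComplex_smul _ _ (D2_mdiff γ)] at hD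
  have hL : (fq ∣[(4 : ℤ)] γ) z = (normalizedDerivOfComplex P ∣[(4 : ℤ)] γ) z
      - 12⁻¹ * ((P ∣[(2 : ℤ)] γ) z * (P ∣[(2 : ℤ)] γ) z) := by
    have := congrFun (ModularForm.mul_slash_SL2 2 2 γ P P) z
    simp only [Pi.mul_apply] at this
    rw [← this]
    simp only [ModularForm.SL_slash_apply, fq, Pi.mul_apply]
    norm_num
    ring
  rw [hL, hEz]
  norm_num only [] at hD
  simp only [Pi.sub_apply, Pi.smul_apply, D_D2, smul_eq_mul, EisensteinSeries.D2] at hD ⊢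
  rw [riemannZeta_two] at hD ⊢
  have hpi : (Real.pi : ℂ) ≠ 0 := by exact_mod_cast Real.pi_ne_zero
  have hI : (2 * Real.pi * Complex.I : ℂ)⁻¹ = - Complex.I / (2 * Real.pi) := by
    field_simp; simp
  rw [hI] at hD
  have h2 := Complex.I_sq
  have h3 : ∀ n d : ℂ, 1 / (2 * ((Real.pi : ℂ) ^ 2 / 6)) * (2 * Real.pi * Complex.I * n / d)
      = 6 * Complex.I / Real.pi * (n / d) := by
    intro n d
    field_simp
  rw [h3] at hD ⊢
  simp only [fq]
  generalize (γ 1 0 : ℂ) / denom γ z = c at hD ⊢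
  linear_combination -hD + 3 * c ^ 2 / (Real.pi : ℂ) ^ 2 * h2

/-- One half of the Chazy expression. -/
def Ch : ℍ → ℂ := serreDerivative ((6 : ℤ) : ℂ) (serreDerivative ((4 : ℤ) : ℂ) fq) + (2 : ℂ) • (fq * fq)

lemma Ch_mdiff : MDiff Ch :=
  (serreDerivative_mdifferentiable _ (serreDerivative_mdifferentiable _ fq_mdiff)).add
    ((fq_mdiff.mul fq_mdiff).const_smul _)

lemma Ch_slash (γ : SL(2, ℤ)) : Ch ∣[(8 : ℤ)] γ = Ch := by
  have h1 := serreDerivative_slash_invariant (k := 4) fq_mdiff (fq_slash γ)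
  have h2 := serreDerivative_slash_invariant (k := 6)
    (serreDerivative_mdifferentiable ((4 : ℤ) : ℂ) fq_mdiff) h1
  have h3 := ModularForm.mul_slash_SL2 4 4 γ fq fq
  rw [fq_slash] at h3
  unfold Ch
  rw [SlashAction.add_slash, ModularForm.SL_smul_slash]
  congr 1
  congr 1

lemma Ch_eq : Ch = fun z => normalizedDerivOfComplex (normalizedDerivOfComplex (normalizedDerivOfComplex P)) z
    - P z * normalizedDerivOfComplex (normalizedDerivOfComplex P) z
    + 3 / 2 * normalizedDerivOfComplex P z ^ 2 := by
  have m0 := P_mdiff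
  have m1 := normalizedDerivOfComplex_mdifferentiable m0
  have m2 := normalizedDerivOfComplex_mdifferentiable m1
  set P1 := normalizedDerivOfComplex P with hP1
  set P2 := normalizedDerivOfComplex P1 with hP2
  have e1 : fq = P1 - (12⁻¹ : ℂ) • (P * P) := by ext z; simp [fq, pow_two, hP1]
  have d1 : normalizedDerivOfComplex fq = P2 - (12⁻¹ : ℂ) • (P1 * P + P * P1) := by
    rw [e1, normalizedDerivOfComplex_sub _ _ m1 ((m0.mul m0).const_smul _),
      normalizedDerivOfComplex_smul _ _ (m0.mul m0), normalizedDerivOfComplex_mul _ _ m0 m0]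
  have m10 := m1.mul m0
  have m01 := m0.mul m1
  have d2 : normalizedDerivOfComplex (P2 - (12⁻¹ : ℂ) • (P1 * P + P * P1)) =
      normalizedDerivOfComplex P2 - (12⁻¹ : ℂ) • ((P2 * P + P1 * P1) + (P1 * P1 + P * P2)) := by
    rw [normalizedDerivOfComplex_sub _ _ m2 ((m10.add m01).const_smul _),
      normalizedDerivOfComplex_smul _ _ (m10.add m01), normalizedDerivOfComplex_add _ _ m10 m01,
      normalizedDerivOfComplex_mul _ _ m0 m1, normalizedDerivOfComplex_mul _ _ m1 m0]
  have e2 : serreDerivative ((4 : ℤ) : ℂ) fq =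
      normalizedDerivOfComplex fq - (3⁻¹ : ℂ) • (P * fq) := by
    ext z; simp [serreDerivative]; ring
  have mf := fq_mdiff
  have mdf := normalizedDerivOfComplex_mdifferentiable mf
  have d3 : normalizedDerivOfComplex (serreDerivative ((4 : ℤ) : ℂ) fq) =
      normalizedDerivOfComplex (normalizedDerivOfComplex fq)
        - (3⁻¹ : ℂ) • (P1 * fq + P * normalizedDerivOfComplex fq) := by
    rw [e2, normalizedDerivOfComplex_sub _ _ mdf ((m0.mul mf).const_smul _),
      normalizedDerivOfComplex_smul _ _ (m0.mul mf), normalizedDerivOfComplex_mul _ _ m0 mf]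
  ext z
  unfold Ch
  rw [Pi.add_apply, serreDerivative_apply, d3, e2, d1, d2, e1]
  simp
  ring

lemma Ch_zero : IsZeroAtImInfty Ch := by
  have m0 := P_mdiff
  have m1 := normalizedDerivOfComplex_mdifferentiable m0
  have m2 := normalizedDerivOfComplex_mdifferentiable m1
  have b0 : IsBoundedAtImInfty P := EisensteinSeries.isBoundedAtImInfty_E2
  have z1 := D_zeroAtImInfty m0 b0
  have z2 := D_zeroAtImInfty m1 z1.isBoundedAtImInfty
  have z3 := D_zeroAtImInfty m2 z2.isBoundedAtImInfty
  have hPb : IsZeroAtImInfty (normalizedDerivOfComplex (normalizedDerivOfComplex P) * P) :=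
    z2.mul_boundedAtFilter b0
  rw [Ch_eq]
  unfold IsZeroAtImInfty ZeroAtFilter at *
  have := (z3.sub hPb).add ((z1.pow 2).const_mul (3 / 2 : ℂ))
  simp only [sub_zero, ne_eq, OfNat.ofNat_ne_zero, not_false_eq_true, zero_pow, mul_zero,
    add_zero] at this
  refine this.congr fun z => ?_
  simp only [Pi.mul_apply]
  ring

/-- The half Chazy expression as a cusp form of weight 8. -/
def ChCusp : CuspForm 𝒮ℒ 8 where
  toFun := Ch
  slash_action_eq' := fun _ ⟨γ, hγ⟩ ↦ hγ ▸ Ch_slash γ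
  holo' := Ch_mdiff
  zero_at_cusps' {c} hc := by
    rw [OnePoint.isZeroAt_iff_forall_SL2Z hc]
    intro γ _
    rw [Ch_slash γ]
    exact Ch_zero

lemma Ch_eq_zero : Ch = 0 := by
  have h := rank_zero_iff_forall_zero.mp
    (CuspForm.rank_eq_zero_of_weight_lt_twelve (k := 8) (by norm_num)) ChCusp
  ext z
  exact congrArg (fun f : CuspForm 𝒮ℒ 8 => f z) h

lemma E2_eq_P (z : ℍ) : E2 z = P z := by
  unfold P
  rw [EisensteinSeries.E2_eq_tsum_cexp,
    tsum_pnat_eq_tsum_succ (f := fun n ↦ (ArithmeticFunction.sigma 1 n : ℂ) * _ ^ n)]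
  simp [E2, sigma', qq, ArithmeticFunction.sigma_apply]

lemma nderiv_eq {F : ℂ → ℂ} {G : ℍ → ℂ} (h : ∀ z : ℍ, F z = G z) (z : ℍ) :
    nderiv F z = normalizedDerivOfComplex G z := by
  unfold nderiv normalizedDerivOfComplex
  congr 1
  apply Filter.EventuallyEq.deriv_eq
  filter_upwards [isOpen_upperHalfPlaneSet.mem_nhds z.im_pos] with w hw
  rw [Function.comp_apply, ofComplex_apply_of_im_pos hw]
  exact h ⟨w, hw⟩

end Aux

/-- The quasi-modular Eisenstein series `E₂` satisfies the Chazy equation. -/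
theorem E2_chazy :
    ∀ τ : ℂ, 0 < τ.im →
      2 * nderiv (nderiv (nderiv E2)) τ - 2 * E2 τ * nderiv (nderiv E2) τ +
        3 * (nderiv E2 τ) ^ 2 = 0 := by
  intro τ hτ
  have e0 := E2_eq_P
  have e1 := nderiv_eq e0
  have e2 := nderiv_eq e1
  have e3 := nderiv_eq e2
  have h := congrFun Ch_eq_zero ⟨τ, hτ⟩
  rw [Ch_eq] at h
  have a0 := e0 ⟨τ, hτ⟩
  have a1 := e1 ⟨τ, hτ⟩
  have a2 := e2 ⟨τ, hτ⟩
  have a3 := e3 ⟨τ, hτ⟩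
  simp only [UpperHalfPlane.coe_mk, Pi.zero_apply] at a0 a1 a2 a3 h
  rw [a0, a1, a2, a3]
  linear_combination 2 * h
end
end

section
/- The Eisenstein series E₆ satisfies the third-order nonlinear ODE given in invariant form by 343(J₆³ − 216I₆³) + 2(256I₆³ + 7J₆²)² = 0, which in cleared polynomial form states: for every τ ∈ ℍ, 343(B³E₆⁴ − 216A³E₆⁸) + 2(256A³ + 7B²)² = 0, where A = 6E₆E₆'' − 7(E₆')² and B = 36E₆²E₆''' − 144E₆E₆'E₆'' + 112(E₆')³. -/
open Complex

noncomputable section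

/-- The Eisenstein series `E₆`. -/
def E6 : ℂ → ℂ := fun τ => 1 - 504 * ∑' n : ℕ, (sigma' 5 (n + 1) : ℂ) * qq τ ^ (n + 1)

section Helpers

open UpperHalfPlane hiding I
open Filter Topology
open scoped Manifold MatrixGroups ModularForm Derivative

/-- A level one cusp form of weight less than 12 vanishes. -/
lemma aux_eq_zero {f : ℍ → ℂ} {k : ℤ} (hk : k < 12) (hf : MDiff f)
    (hs : ∀ γ : SL(2, ℤ), f ∣[k] γ = f) (h0 : IsZeroAtImInfty f) : f = 0 := by
  let F : CuspForm 𝒮ℒ k :=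
    { toFun := f
      slash_action_eq' := by
        rintro A ⟨A, rfl⟩
        exact hs A
      holo' := hf
      zero_at_cusps' := by
        intro c hc
        rw [OnePoint.isZeroAt_iff_forall_SL2Z hc]
        intro γ _
        rw [hs γ]
        exact h0 }
  have h := rank_zero_iff_forall_zero.mp (CuspForm.rank_eq_zero_of_weight_lt_twelve hk) F
  exact congrArg DFunLike.coe h

/-- The derivative of a function bounded at infinity tends to zero at infinity. -/
lemma aux_D_zero {f : ℍ → ℂ} (hf : MDiff f) (hb : IsBoundedAtImInfty f) :
    IsZeroAtImInfty (Derivative.normalizedDerivOfComplex f) := by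
  obtain ⟨M, A, hM⟩ := isBoundedAtImInfty_iff.mp hb
  rw [isZeroAtImInfty_iff]
  intro ε hε
  have hd := UpperHalfPlane.mdifferentiable_iff.mp hf
  set K : ℝ := ‖(2 * (Real.pi : ℂ) * Complex.I)⁻¹‖ with hK
  have hK0 : 0 ≤ K := norm_nonneg _
  set R : ℝ := K * |M| / ε + 1 with hR
  have hRpos : 0 < R := by positivity
  refine ⟨|A| + R + 1, fun z hz => ?_⟩
  have him : ∀ w : ℂ, dist w z ≤ R → |A| + 1 ≤ w.im := by
    intro w hw
    have h1 : |(w - z).im| ≤ R := (Complex.abs_im_le_norm _).trans (by rwa [← dist_eq_norm])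
    have h2 := (abs_le.mp h1).1
    rw [Complex.sub_im] at h2
    have h3 : ((z : ℂ)).im = z.im := rfl
    linarith
  have hA := abs_nonneg A
  have hC : ‖deriv (f ∘ ofComplex) (z : ℂ)‖ ≤ |M| / R := by
    refine Complex.norm_deriv_le_of_forall_mem_sphere_norm_le hRpos ?_ ?_
    · refine DifferentiableOn.diffContOnCl (hd.mono ?_)
      intro w hw
      have := him w (Metric.closure_ball_subset_closedBall hw)
      simp only [Set.mem_ofPred_eq]
      linarith
    · intro w hw
      have h1 := him w (le_of_eq hw)
      have hw0 : 0 < w.im := by linarith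
      simp only [Function.comp_apply, ofComplex_apply_of_im_pos hw0]
      refine (hM ⟨w, hw0⟩ ?_).trans (le_abs_self M)
      have h3 : (⟨w, hw0⟩ : ℍ).im = w.im := rfl
      rw [h3]
      linarith [le_abs_self A]
  unfold Derivative.normalizedDerivOfComplex
  rw [norm_mul, ← hK]
  calc K * ‖deriv (f ∘ ofComplex) (z : ℂ)‖ ≤ K * (|M| / R) := by gcongr
    _ ≤ ε := by
      rw [← mul_div_assoc, div_le_iff₀ hRpos, hR, mul_add, mul_div_cancel₀ _ hε.ne']
      linarith

lemma aux_tendsto {f : ℍ → ℂ} {c : ℕ → ℂ}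
    (hf : ∀ τ : ℍ, HasSum (fun m ↦ c m • Function.Periodic.qParam 1 τ ^ m) (f τ)) :
    Tendsto f atImInfty (𝓝 (c 0)) := by
  have hq : ∀ τ : ℍ, Function.Periodic.qParam 1 τ ≠ 0 := fun τ => Complex.exp_ne_zero _
  have hg : ∀ τ : ℍ, HasSum (fun m ↦ c (m + 1) • Function.Periodic.qParam 1 τ ^ m)
      ((Function.Periodic.qParam 1 τ)⁻¹ * (f τ - c 0)) := by
    intro τ
    have h1 := ((hasSum_nat_add_iff' 1).mpr (hf τ)).mul_left (Function.Periodic.qParam 1 τ)⁻¹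
    convert! h1 using 1
    · funext m
      have := hq τ
      simp only [smul_eq_mul, pow_succ]
      field_simp
    · simp
  have hb := isBoundedAtImInfty_of_hasSum_qExpansion one_pos hg
  have hz : Tendsto (fun τ : ℍ => Function.Periodic.qParam 1 τ *
      ((Function.Periodic.qParam 1 τ)⁻¹ * (f τ - c 0))) atImInfty (𝓝 0) :=
    (qParam_tendsto_atImInfty one_pos).zero_mul_isBoundedUnder_le
      ((Asymptotics.isBigO_one_iff ℝ).mp hb)
  have hz2 : Tendsto (fun τ : ℍ => f τ - c 0) atImInfty (𝓝 0) := by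
    refine hz.congr fun τ => ?_
    rw [mul_inv_cancel_left₀ (hq τ)]
  simpa using hz2.add_const (c 0)

lemma E2_tendsto : Tendsto EisensteinSeries.E2 atImInfty (𝓝 1) := by
  refine aux_tendsto (c := fun m : ℕ ↦ (if m = 0 then 1 else -24 * ArithmeticFunction.sigma 1 m : ℂ)) ?_
  intro τ
  simpa only [Function.Periodic.qParam, ofReal_one, div_one] using
    EisensteinSeries.hasSum_qExpansion_E2 (z := τ)

lemma E_tendsto {k : ℕ} (hk : 3 ≤ k) (hk2 : Even k) :
    Tendsto (ModularForm.E hk) atImInfty (𝓝 1) := by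
  rw [← EisensteinSeries.E_qExpansion_coeff_zero hk hk2]
  exact aux_tendsto fun τ => ModularForm.hasSum_qExpansion _ one_pos one_mem_strictPeriods_SL τ

lemma E_slash {k : ℕ} (hk : 3 ≤ k) (γ : SL(2, ℤ)) :
    (ModularForm.E hk : ℍ → ℂ) ∣[(k : ℤ)] γ = ModularForm.E hk :=
  SlashInvariantForm.slash_action_eqn (ModularForm.E hk) _ ⟨γ, rfl⟩

lemma E2_serre_slash (γ : SL(2, ℤ)) :
    (fun z => Derivative.normalizedDerivOfComplex EisensteinSeries.E2 z
      - EisensteinSeries.E2 z ^ 2 / 12) ∣[(4 : ℤ)] γ =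
    (fun z => Derivative.normalizedDerivOfComplex EisensteinSeries.E2 z
      - EisensteinSeries.E2 z ^ 2 / 12) := by
  have hj : ∀ z : ℍ, denom γ z ≠ 0 := fun z => denom_ne_zero γ z
  have hsl : ∀ z, (EisensteinSeries.E2 ∣[(2 : ℤ)] γ) z = EisensteinSeries.E2 z -
      6 * I / Real.pi * ((γ 1 0 : ℂ) / denom γ z) := by
    intro z
    rw [EisensteinSeries.E2_slash_action]
    simp only [Pi.sub_apply, Pi.smul_apply, smul_eq_mul, EisensteinSeries.D2, riemannZeta_two]
    have := hj z
    field_simp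
  have hD := congrFun (Derivative.normalizedDerivOfComplex_SL_slash (k := 2)
    E2_mdifferentiable (γ := γ))
  ext z
  have hDz := hD z
  have hder : HasDerivAt (fun w => (denom γ w) ^ (-1 : ℤ)) (-(γ 1 0 : ℂ) * (denom γ z) ^ (-2 : ℤ)) z := by
    simpa using hasDerivAt_denom_zpow (γ : GL (Fin 2) ℝ) (-1) z
  have hE := (UpperHalfPlane.mdifferentiableAt_iff.mp (E2_mdifferentiable z)).hasDerivAt
  have hLHS : Derivative.normalizedDerivOfComplex (EisensteinSeries.E2 ∣[(2 : ℤ)] γ) z =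
      Derivative.normalizedDerivOfComplex EisensteinSeries.E2 z +
        3 / Real.pi ^ 2 * ((γ 1 0 : ℂ) / denom γ z) ^ 2 := by
    have hev : ((EisensteinSeries.E2 ∣[(2 : ℤ)] γ) ∘ ofComplex) =ᶠ[𝓝 (z : ℂ)]
        fun w => (EisensteinSeries.E2 ∘ ofComplex) w -
          6 * I / Real.pi * (γ 1 0 : ℂ) * (denom γ w) ^ (-1 : ℤ) := by
      filter_upwards [isOpen_upperHalfPlaneSet.mem_nhds z.im_pos] with w hw
      simp only [Function.comp_apply, hsl, ofComplex_apply_of_im_pos hw, zpow_neg, zpow_one]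
      ring
    unfold Derivative.normalizedDerivOfComplex
    rw [((hE.sub (hder.const_mul _)).congr_of_eventuallyEq hev).deriv]
    have h2 : (Real.pi : ℂ) ≠ 0 := by exact_mod_cast Real.pi_ne_zero
    have := hj z
    rw [zpow_neg, zpow_ofNat]
    field_simp
    ring
  rw [hLHS] at hDz
  simp only [Pi.sub_apply, hsl] at hDz
  have h4 : ((fun z => Derivative.normalizedDerivOfComplex EisensteinSeries.E2 z
      - EisensteinSeries.E2 z ^ 2 / 12) ∣[(4 : ℤ)] γ) z =
      (Derivative.normalizedDerivOfComplex EisensteinSeries.E2 ∣[(2 + 2 : ℤ)] γ) z -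
        (EisensteinSeries.E2 ∣[(2 : ℤ)] γ) z ^ 2 / 12 := by
    simp only [ModularForm.SL_slash_apply]
    have := hj z
    norm_num
    field_simp
  rw [h4, hsl]
  have h5 : (Derivative.normalizedDerivOfComplex EisensteinSeries.E2 ∣[(2 + 2 : ℤ)] γ) z = _ :=
    (sub_eq_iff_eq_add.mp hDz.symm)
  rw [h5]
  have h2 : (Real.pi : ℂ) ≠ 0 := by exact_mod_cast Real.pi_ne_zero
  have hI : I ^ 2 = -1 := I_sq
  have := hj z
  generalize (γ 1 0 : ℂ) / denom γ z = u
  field_simp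
  grind

lemma ram2 : (fun z => Derivative.normalizedDerivOfComplex EisensteinSeries.E2 z
      - EisensteinSeries.E2 z ^ 2 / 12) + (12⁻¹ : ℂ) • (ModularForm.E₄ : ℍ → ℂ) = 0 := by
  refine aux_eq_zero (k := 4) (by norm_num) ?_ ?_ ?_
  · have h1 : MDiff (Derivative.serreDerivative 1 EisensteinSeries.E2) :=
      Derivative.serreDerivative_mdifferentiable 1 E2_mdifferentiable
    have h2 : MDiff ((12⁻¹ : ℂ) • (ModularForm.E₄ : ℍ → ℂ)) :=
      (ModularFormClass.holo ModularForm.E₄).const_smul _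
    convert h1.add h2 using 2
    funext z
    simp
    ring
  · intro γ
    rw [SlashAction.add_slash, E2_serre_slash, ModularForm.SL_smul_slash]
    congr 2
    exact E_slash (k := 4) _ γ
  · have h1 := aux_D_zero E2_mdifferentiable (E2_tendsto.isBigO_one ℝ)
    have h2 := (h1.sub ((E2_tendsto.pow 2).div_const 12)).add
      ((E_tendsto (k := 4) (by norm_num) ⟨2, rfl⟩).const_mul (12⁻¹ : ℂ))
    unfold IsZeroAtImInfty ZeroAtFilter
    convert! h2 using 2
    norm_num

lemma ram4 : Derivative.serreDerivative (4 : ℤ) (ModularForm.E₄ : ℍ → ℂ) +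
    (3⁻¹ : ℂ) • (ModularForm.E₆ : ℍ → ℂ) = 0 := by
  have hE := ModularFormClass.holo ModularForm.E₄
  refine aux_eq_zero (k := 4 + 2) (by norm_num) ?_ ?_ ?_
  · exact (Derivative.serreDerivative_mdifferentiable _ hE).add
      ((ModularFormClass.holo ModularForm.E₆).const_smul _)
  · intro γ
    have hs := Derivative.serreDerivative_slash_invariant (k := 4) hE (E_slash (k := 4) _ γ)
    rw [SlashAction.add_slash, hs, ModularForm.SL_smul_slash]
    congr 2
    exact E_slash (k := 6) _ γ
  · have t4 := E_tendsto (k := 4) (by norm_num) ⟨2, rfl⟩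
    have t6 := E_tendsto (k := 6) (by norm_num) ⟨3, rfl⟩
    have h1 := aux_D_zero hE (t4.isBigO_one ℝ)
    have h2 := (h1.sub ((E2_tendsto.const_mul (((4 : ℤ) : ℂ) * 12⁻¹)).mul t4)).add
      (t6.const_mul (3⁻¹ : ℂ))
    unfold IsZeroAtImInfty ZeroAtFilter
    convert! h2 using 2
    norm_num

lemma ram6 : Derivative.serreDerivative (6 : ℤ) (ModularForm.E₆ : ℍ → ℂ) +
    (2⁻¹ : ℂ) • ((ModularForm.E₄ : ℍ → ℂ) * (ModularForm.E₄ : ℍ → ℂ)) = 0 := by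
  have hE := ModularFormClass.holo ModularForm.E₆
  refine aux_eq_zero (k := 6 + 2) (by norm_num) ?_ ?_ ?_
  · exact (Derivative.serreDerivative_mdifferentiable _ hE).add
      (((ModularFormClass.holo ModularForm.E₄).mul (ModularFormClass.holo ModularForm.E₄)).const_smul _)
  · intro γ
    have hs := Derivative.serreDerivative_slash_invariant (k := 6) hE (E_slash (k := 6) _ γ)
    rw [SlashAction.add_slash, hs, ModularForm.SL_smul_slash]
    congr 2
    refine (ModularForm.mul_slash_SL2 4 4 γ _ _).trans ?_
    have h4 : (ModularForm.E₄ : ℍ → ℂ) ∣[(4 : ℤ)] γ = ModularForm.E₄ := E_slash (k := 4) _ γ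
    rw [h4]
  · have t4 := E_tendsto (k := 4) (by norm_num) ⟨2, rfl⟩
    have t6 := E_tendsto (k := 6) (by norm_num) ⟨3, rfl⟩
    have h1 := aux_D_zero hE (t6.isBigO_one ℝ)
    have h2 := (h1.sub ((E2_tendsto.const_mul (((6 : ℤ) : ℂ) * 12⁻¹)).mul t6)).add
      ((t4.mul t4).const_mul (2⁻¹ : ℂ))
    unfold IsZeroAtImInfty ZeroAtFilter
    convert! h2 using 2
    norm_num

lemma E6_eq (z : ℍ) : E6 z = ModularForm.E₆ z := by
  have h := EisensteinSeries.q_expansion_bernoulli (k := 6) (by norm_num) ⟨3, rfl⟩ z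
  have hb := EisensteinSeries.E_qExpansion_coeff (k := 6) (by norm_num) ⟨3, rfl⟩ 1
  have hc := hb.symm.trans ModularForm.E₆_qExpansion_coeff_one
  simp only [one_ne_zero, if_false, ArithmeticFunction.sigma_one, Nat.cast_one, mul_one,
    neg_inj] at hc
  rw [h, E6, hc]
  have h2 := tsum_pnat_eq_tsum_succ (f := fun n : ℕ =>
    (ArithmeticFunction.sigma 5 n : ℂ) * Complex.exp (2 * Real.pi * Complex.I * z) ^ n)
  simp only [qq, sigma', ArithmeticFunction.sigma_apply] at h2 ⊢
  norm_num at h2 ⊢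
  rw [← h2]

/-- Differentiating along `f ∘ ofComplex`. -/
lemma hasDerivAt_of_D {f : ℍ → ℂ} (hf : MDiff f) (z : ℍ) :
    HasDerivAt (f ∘ ofComplex) (2 * Real.pi * I * Derivative.normalizedDerivOfComplex f z) z := by
  have h := (UpperHalfPlane.mdifferentiableAt_iff.mp (hf z)).hasDerivAt
  unfold Derivative.normalizedDerivOfComplex
  rwa [mul_inv_cancel_left₀ Complex.two_pi_I_ne_zero]

lemma nderiv_congr {f g : ℂ → ℂ} {g' : ℂ} {z : ℂ} (hz : 0 < z.im)
    (h : ∀ w : ℂ, 0 < w.im → f w = g w) (hg : HasDerivAt g (2 * Real.pi * I * g') z) :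
    nderiv f z = g' := by
  have hev : f =ᶠ[𝓝 z] g := by
    filter_upwards [isOpen_upperHalfPlaneSet.mem_nhds hz] with w hw
    exact h w hw
  unfold nderiv
  rw [(hg.congr_of_eventuallyEq hev).deriv, inv_mul_cancel_left₀ Complex.two_pi_I_ne_zero]

lemma ode_exists : ∃ P Q R : ℂ → ℂ, ∀ z : ℂ, 0 < z.im → E6 z = R z ∧
    HasDerivAt P (2 * Real.pi * I * ((P z ^ 2 - Q z) / 12)) z ∧
    HasDerivAt Q (2 * Real.pi * I * ((P z * Q z - R z) / 3)) z ∧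
    HasDerivAt R (2 * Real.pi * I * ((P z * R z - Q z ^ 2) / 2)) z := by
  refine ⟨EisensteinSeries.E2 ∘ ofComplex, ModularForm.E₄ ∘ ofComplex,
    ModularForm.E₆ ∘ ofComplex, fun z hz => ?_⟩
  have hoz : ofComplex z = ⟨z, hz⟩ := ofComplex_apply_of_im_pos hz
  simp only [Function.comp_apply, hoz]
  set w : ℍ := ⟨z, hz⟩ with hw
  have r2 := congrFun ram2 w
  have r4 := congrFun ram4 w
  have r6 := congrFun ram6 w
  simp only [Pi.add_apply, Pi.smul_apply, Pi.mul_apply, Pi.zero_apply, smul_eq_mul,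
    Derivative.serreDerivative_apply] at r2 r4 r6
  push_cast at r4 r6
  refine ⟨E6_eq w, ?_, ?_, ?_⟩
  · convert hasDerivAt_of_D E2_mdifferentiable w using 2
    linear_combination -r2
  · convert hasDerivAt_of_D (ModularFormClass.holo ModularForm.E₄) w using 2
    linear_combination -r4
  · convert hasDerivAt_of_D (ModularFormClass.holo ModularForm.E₆) w using 2
    linear_combination -r6

end Helpers

/-- The Eisenstein series `E₆` satisfies the third-order nonlinear ODE
`343(J₆³ − 216I₆³) + 2(256I₆³ + 7J₆²)² = 0` in cleared polynomial form. -/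
theorem E6_third_order_ODE :
    ∀ τ : ℂ, 0 < τ.im →
      let A := 6 * E6 τ * nderiv (nderiv E6) τ - 7 * (nderiv E6 τ) ^ 2
      let B := 36 * E6 τ ^ 2 * nderiv (nderiv (nderiv E6)) τ -
        144 * E6 τ * nderiv E6 τ * nderiv (nderiv E6) τ + 112 * (nderiv E6 τ) ^ 3
      343 * (B ^ 3 * E6 τ ^ 4 - 216 * A ^ 3 * E6 τ ^ 8) +
        2 * (256 * A ^ 3 + 7 * B ^ 2) ^ 2 = 0 := by
  obtain ⟨P, Q, R, h⟩ := ode_exists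
  have h1 : ∀ w : ℂ, 0 < w.im → nderiv E6 w = (P w * R w - Q w ^ 2) / 2 := by
    intro w hw
    exact nderiv_congr hw (fun v hv => (h v hv).1) (h w hw).2.2.2
  have h2 : ∀ w : ℂ, 0 < w.im → nderiv (nderiv E6) w =
      7 / 24 * P w ^ 2 * R w - 7 / 12 * P w * Q w ^ 2 + 7 / 24 * Q w * R w := by
    intro w hw
    obtain ⟨-, hP, hQ, hR⟩ := h w hw
    refine nderiv_congr hw h1 ?_
    convert! ((hP.mul hR).sub (hQ.pow 2)).div_const 2 using 1
    push_cast
    ring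
  intro τ hτ
  obtain ⟨h0, hP, hQ, hR⟩ := h τ hτ
  have h3 : nderiv (nderiv (nderiv E6)) τ = 7 / 24 * (2 * P τ * ((P τ ^ 2 - Q τ) / 12) * R τ +
        P τ ^ 2 * ((P τ * R τ - Q τ ^ 2) / 2)) -
      7 / 12 * ((P τ ^ 2 - Q τ) / 12 * Q τ ^ 2 + P τ * (2 * Q τ * ((P τ * Q τ - R τ) / 3))) +
      7 / 24 * ((P τ * Q τ - R τ) / 3 * R τ + Q τ * ((P τ * R τ - Q τ ^ 2) / 2)) := by
    refine nderiv_congr hτ h2 ?_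
    convert! (((((hP.pow 2).const_mul (7 / 24)).mul hR).sub ((hP.const_mul (7 / 12)).mul (hQ.pow 2))).add
      ((hQ.const_mul (7 / 24)).mul hR)) using 1
    simp only [Pi.pow_apply]
    push_cast
    ring
  simp only [h0, h1 τ hτ, h2 τ hτ, h3]
  generalize P τ = p
  generalize Q τ = q
  generalize R τ = r
  have hA : 6 * r * (7 / 24 * p ^ 2 * r - 7 / 12 * p * q ^ 2 + 7 / 24 * q * r) -
      7 * ((p * r - q ^ 2) / 2) ^ 2 = 7 / 4 * q * (r ^ 2 - q ^ 3) := by ring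
  rw [hA]
  ring
end
end
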